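/- Let t ∈ Y_n be a planar binary tree whose i-th interior leaf is right-oriented, for some 1 ≤ i ≤ n−1 (i.e. φ_n(t)_i = −1). If w ∈ Y_n satisfies w ≤ t in the weak order on Y_n, then the i-th interior leaf of w is also right-oriented (i.e. φ_n(w)_i = −1). -/

import Mathlib

/-- Planar binary trees: `leaf` is the tree `|` (no interior vertex) and
`node l r = l ∨ r` is the grafting of `l` and `r` (their roots are joined to a new
vertex, which becomes the root). -/
inductive PBTree : Type
  | leaf : PBTree
  | node : PBTree → PBTree → PBTree
deriving DecidableEq

/-- The number of interior vertices of a planar binary tree: `t ∈ Yₙ` iff `t.size = n`. -/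
def PBTree.size : PBTree → ℕ
  | .leaf => 0
  | .node l r => l.size + r.size + 1

/-- The weak order on planar binary trees, generated transitively by
(a) `u ≤ u' → v ≤ v' → u∨v ≤ u'∨v'` and (b) `(u∨v)∨w ≤ u∨(v∨w)`. -/
inductive TreeLe : PBTree → PBTree → Prop
  | refl (t : PBTree) : TreeLe t t
  | graft {u u' v v' : PBTree} : TreeLe u u' → TreeLe v v' →
      TreeLe (.node u v) (.node u' v')
  | rotate (u v w : PBTree) : TreeLe (.node (.node u v) w) (.node u (.node v w))
  | trans {a b c : PBTree} : TreeLe a b → TreeLe b c → TreeLe a c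

/-- `phi t` is `φₙ(t) = (ε₁, …, ε_{n-1}) ∈ Qₙ = {±1}^{n-1}` for `t ∈ Yₙ`: the orientations
of the `n-1` interior leaves of `t` (all leaves except the two extreme ones), where
`εᵢ = -1` if the `i`-th interior leaf is right-oriented (SW–NE, a right child) and
`εᵢ = +1` if it is left-oriented (SE–NW, a left child).  Elements of `Qₙ` are modelled
as lists of integers of length `n-1` with entries `±1`. -/
def phi : PBTree → List ℤ
  | .leaf => []
  | .node .leaf .leaf => []
  | .node .leaf (.node c d) => 1 :: phi (.node c d)
  | .node (.node a b) .leaf => phi (.node a b) ++ [-1]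
  | .node (.node a b) (.node c d) => phi (.node a b) ++ ([-1, 1] ++ phi (.node c d))

def SgnR (a b : ℤ) : Prop := b = -1 → a = -1

theorem sgnR_refl (l : List ℤ) : List.Forall₂ SgnR l l :=
  List.forall₂_same.2 (fun _ _ h => h)

theorem sgnR_trans : ∀ {a b c : List ℤ}, List.Forall₂ SgnR a b → List.Forall₂ SgnR b c →
    List.Forall₂ SgnR a c
  | _, _, _, .nil, .nil => .nil
  | _, _, _, .cons h t, .cons h' t' => .cons (fun e => h (h' e)) (sgnR_trans t t')

theorem sgnR_append {a b c d : List ℤ} (h : List.Forall₂ SgnR a b)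
    (h' : List.Forall₂ SgnR c d) : List.Forall₂ SgnR (a ++ c) (b ++ d) := by
  induction h with
  | nil => exact h'
  | cons h _ ih => exact .cons h ih

theorem treeLe_leaf {a b : PBTree} (h : TreeLe a b) : a = .leaf ↔ b = .leaf := by
  induction h with
  | refl => rfl
  | graft => simp
  | rotate => simp
  | trans _ _ h1 h2 => exact h1.trans h2

theorem phi_mono {a b : PBTree} (h : TreeLe a b) : List.Forall₂ SgnR (phi a) (phi b) := by
  induction h with
  | refl => exact sgnR_refl _
  | trans _ _ h1 h2 => exact sgnR_trans h1 h2
  | @graft u u' v v' hu hv h1 h2 =>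
    have e1 := treeLe_leaf hu
    have e2 := treeLe_leaf hv
    cases u <;> cases u' <;> simp at e1 <;> cases v <;> cases v' <;> simp at e2 <;>
      simp only [phi]
    · exact .nil
    · exact .cons (fun h => h) h2
    · exact sgnR_append h1 (sgnR_refl _)
    · exact sgnR_append h1 (sgnR_append (sgnR_refl _) h2)
  | rotate u v w =>
    cases u <;> cases v <;> cases w <;> simp only [phi, List.append_assoc, List.cons_append, List.nil_append] <;>
      repeat' first
        | exact sgnR_refl _
        | apply sgnR_append (sgnR_refl _)
        | refine List.Forall₂.cons (by simp [SgnR]) ?_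

/-- Lemma 3.4: let `t ∈ Yₙ` be a tree whose `i`-th interior leaf is
right-oriented, i.e. `φₙ(t)ᵢ = -1` (with `1 ≤ i ≤ n-1`; lists being 0-indexed, the
`i`-th entry of `φₙ(t)` is `(phi t)[i-1]`, so we quantify over the 0-based index).
If `w ∈ Yₙ` satisfies `w ≤ t` in the weak order, then the `i`-th interior leaf of `w`
is also right-oriented: `φₙ(w)ᵢ = -1`. -/
theorem stmt16 (n : ℕ) (t w : PBTree) (ht : t.size = n) (hw : w.size = n)
    (i : ℕ) (hi : i < (phi t).length) (hor : (phi t)[i] = -1)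
    (hle : TreeLe w t) :
    (phi w)[i]? = some (-1) := by
  have h := phi_mono hle
  have hl := h.length_eq
  have hi' : i < (phi w).length := by omega
  rw [List.getElem?_eq_getElem hi']
  exact congrArg some ((List.forall₂_iff_get.1 h).2 i hi' hi hor)
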